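/- arXiv:2103.14974 — 4 statements merged into one kernel-verified Lean document; each statement's English description precedes it below -/
import Mathlib

section
/- Let U ∈ ℝ^{m×r} and V ∈ ℝ^{n×r} have orthonormal columns (UᵀU = I_r, VᵀV = I_r), and define P(Z) = Z V Vᵀ + U Uᵀ Z (I_n − V Vᵀ). Then for every Z ∈ ℝ^{m×n} and every T = ΔU Vᵀ + U ΔVᵀ with Vᵀ ΔV = 0, the residual Z − P(Z) is Frobenius-orthogonal to T: ⟨Z − P(Z), T⟩ = 0. -/
open Matrix

/-- For `P Z = Z V Vᵀ + U Uᵀ Z (I - V Vᵀ)` with `U, V` having orthonormal columns: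
`Z - P Z` is Frobenius-orthogonal to every tangent vector `T = ΔU Vᵀ + U ΔVᵀ`
with `Vᵀ ΔV = 0`. -/
theorem stmt_4 {m n r : ℕ}
    (U : Matrix (Fin m) (Fin r) ℝ) (V : Matrix (Fin n) (Fin r) ℝ)
    (hU : Uᵀ * U = 1) (hV : Vᵀ * V = 1)
    (P : Matrix (Fin m) (Fin n) ℝ → Matrix (Fin m) (Fin n) ℝ)
    (hP : ∀ Z, P Z = Z * V * Vᵀ + U * Uᵀ * Z * (1 - V * Vᵀ)) :
    ∀ (Z : Matrix (Fin m) (Fin n) ℝ) (ΔU : Matrix (Fin m) (Fin r) ℝ)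
      (ΔV : Matrix (Fin n) (Fin r) ℝ), Vᵀ * ΔV = 0 →
      ∑ i, ∑ j, (Z - P Z) i j * (ΔU * Vᵀ + U * ΔVᵀ) i j = 0 := by
  intro Z ΔU ΔV _
  have h1 : (Z - P Z) * V = 0 := by
    have e : (1 - V * Vᵀ) * V = 0 := by
      rw [Matrix.sub_mul, Matrix.mul_assoc, hV]; simp
    rw [hP, Matrix.sub_mul, Matrix.add_mul, Matrix.mul_assoc (Z * V), hV,
      Matrix.mul_assoc (U * Uᵀ * Z), e]
    simp
  have h2 : Uᵀ * (Z - P Z) = 0 := by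
    have e : Uᵀ * (U * Uᵀ * Z * (1 - V * Vᵀ)) = Uᵀ * Z * (1 - V * Vᵀ) := by
      simp only [← Matrix.mul_assoc]
      rw [hU, Matrix.one_mul]
    rw [hP, Matrix.mul_sub, Matrix.mul_add, e, Matrix.mul_sub]
    simp [Matrix.mul_assoc]
  have h3 : ∑ i, ∑ j, (Z - P Z) i j * (ΔU * Vᵀ + U * ΔVᵀ) i j
      = Matrix.trace ((Z - P Z) * (ΔU * Vᵀ + U * ΔVᵀ)ᵀ) := by
    simp only [Matrix.trace, Matrix.diag_apply, Matrix.mul_apply, Matrix.transpose_apply]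
  rw [h3, Matrix.transpose_add, Matrix.transpose_mul, Matrix.transpose_mul,
    Matrix.transpose_transpose, Matrix.transpose_transpose, Matrix.mul_add,
    ← Matrix.mul_assoc, h1, ← Matrix.mul_assoc, Matrix.trace_add,
    Matrix.trace_mul_comm _ Uᵀ, ← Matrix.mul_assoc, h2]
  simp
end

section
/- Let f : ℝ^{m×n} → ℝ be twice continuously differentiable, let X₀ = U S Vᵀ with U ∈ ℝ^{m×r}, V ∈ ℝ^{n×r} having orthonormal columns, let P(Z) = Z V Vᵀ + U Uᵀ Z (I_n − V Vᵀ), and let Z ∈ ℝ^{m×n} be an element of the tangent set at X₀ (so P(Z) = Z). Define w : ℝ^{m×n} → ℝ by w(Y) = ⟨P(∇f(Y)), Z⟩, where the projection P uses the fixed point X₀. Let H ∈ ℝ^{m×n} be the matrix representing the Euclidean Hessian of f at X₀ applied to Z, i.e., ⟨H, E⟩ = D²f(X₀)[Z, E] for all E ∈ ℝ^{m×n}. Then the Euclidean gradient of w at X₀ satisfies P(∇w(X₀)) = P(H), i.e., the Riemannian gradient of w at X₀ equals the approximate Riemannian Hessian of f at X₀ applied to Z. -/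
open Matrix

attribute [local instance] Matrix.normedAddCommGroup Matrix.normedSpace

theorem aux_fderiv_apply {F : Type*} [NormedAddCommGroup F] [NormedSpace ℝ F]
    (f : F → ℝ) (hf : ContDiff ℝ 2 f) (x z e : F) :
    fderiv ℝ (fun y => fderiv ℝ f y z) x e = fderiv ℝ (fderiv ℝ f) x z e := by
  have hd : DifferentiableAt ℝ (fderiv ℝ f) x :=
    ((hf.fderiv_right (m := 1) (by norm_num)).differentiable (by norm_num)) x
  have hsymm : IsSymmSndFDerivAt ℝ f x :=
    hf.contDiffAt.isSymmSndFDerivAt (by simp)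
  have h : HasFDerivAt (fun y => fderiv ℝ f y z) ((fderiv ℝ (fderiv ℝ f) x).flip z) x := by
    have := hd.hasFDerivAt.clm_apply (hasFDerivAt_const z x)
    simpa using this
  rw [h.fderiv]
  exact hsymm.eq e z

/-- Let `f : ℝ^{m×n} → ℝ` be C², `X₀ = U S Vᵀ` with `U, V` having orthonormal columns,
`P` the tangent-space projection at `X₀`, and `Z` a tangent vector (`P Z = Z`).
Let `G Y` be the Euclidean gradient of `f` at `Y` (`Df(Y)[E] = ⟨G Y, E⟩`), and define
`w(Y) = ⟨P(∇f(Y)), Z⟩` (the projection `P` uses the fixed point `X₀`). Let `H`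
represent the Euclidean Hessian of `f` at `X₀` applied to `Z`
(`⟨H, E⟩ = D²f(X₀)[Z, E]`). Then the Riemannian gradient of `w` at `X₀` equals the
approximate Riemannian Hessian of `f` at `X₀` applied to `Z`: `P(∇w(X₀)) = P(H)`. -/
theorem stmt_12 {m n r : ℕ}
    (U : Matrix (Fin m) (Fin r) ℝ) (V : Matrix (Fin n) (Fin r) ℝ)
    (S : Matrix (Fin r) (Fin r) ℝ)
    (hU : Uᵀ * U = 1) (hV : Vᵀ * V = 1)
    (X₀ : Matrix (Fin m) (Fin n) ℝ) (hX₀ : X₀ = U * S * Vᵀ)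
    (P : Matrix (Fin m) (Fin n) ℝ → Matrix (Fin m) (Fin n) ℝ)
    (hP : ∀ Z, P Z = Z * V * Vᵀ + U * Uᵀ * Z * (1 - V * Vᵀ))
    (f : Matrix (Fin m) (Fin n) ℝ → ℝ) (hf : ContDiff ℝ 2 f)
    (G : Matrix (Fin m) (Fin n) ℝ → Matrix (Fin m) (Fin n) ℝ)
    (hG : ∀ Y E, fderiv ℝ f Y E = ∑ i, ∑ j, (G Y) i j * E i j)
    (Z : Matrix (Fin m) (Fin n) ℝ) (hZ : P Z = Z)
    (w : Matrix (Fin m) (Fin n) ℝ → ℝ)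
    (hw : ∀ Y, w Y = ∑ i, ∑ j, (P (G Y)) i j * Z i j)
    (H : Matrix (Fin m) (Fin n) ℝ)
    (hH : ∀ E, ∑ i, ∑ j, H i j * E i j = fderiv ℝ (fderiv ℝ f) X₀ Z E)
    (Gw : Matrix (Fin m) (Fin n) ℝ)
    (hGw : ∀ E, fderiv ℝ w X₀ E = ∑ i, ∑ j, Gw i j * E i j) :
    P Gw = P H := by
  have hin : ∀ A B : Matrix (Fin m) (Fin n) ℝ,
      ∑ i, ∑ j, A i j * B i j = (Aᵀ * B).trace := by
    intro A B
    simp only [Matrix.trace, Matrix.diag, Matrix.mul_apply, Matrix.transpose_apply]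
    exact Finset.sum_comm
  have hadj : ∀ A B : Matrix (Fin m) (Fin n) ℝ,
      ((P A)ᵀ * B).trace = (Aᵀ * P B).trace := by
    intro A B
    have h1 : (P A)ᵀ * B = (V * Vᵀ) * (Aᵀ * B) + (1 - V * Vᵀ) * (Aᵀ * (U * Uᵀ * B)) := by
      rw [hP]
      simp only [Matrix.transpose_add, Matrix.transpose_mul, Matrix.transpose_sub,
        Matrix.transpose_one, Matrix.transpose_transpose, Matrix.add_mul, Matrix.mul_assoc]
    have h2 : Aᵀ * P B = (Aᵀ * B) * (V * Vᵀ) + (Aᵀ * (U * Uᵀ * B)) * (1 - V * Vᵀ) := by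
      rw [hP]
      simp only [Matrix.mul_add, Matrix.mul_assoc]
    rw [h1, h2, Matrix.trace_add, Matrix.trace_add, Matrix.trace_mul_comm (V * Vᵀ),
      Matrix.trace_mul_comm (1 - V * Vᵀ)]
  have hwf : w = fun Y => fderiv ℝ f Y Z := by
    funext Y
    rw [hw, hG, hin, hin, hadj, hZ]
  have hE : ∀ E, fderiv ℝ w X₀ E = fderiv ℝ (fderiv ℝ f) X₀ Z E := by
    intro E
    rw [hwf]
    exact aux_fderiv_apply f hf X₀ Z E
  have hGH : Gw = H := by
    ext a b
    have h := (hGw (Matrix.single a b 1)).symm.trans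
      ((hE _).trans (hH (Matrix.single a b 1)).symm)
    simpa [Matrix.single_apply, ite_and, Finset.sum_ite_eq] using h
  rw [hGH]
end

section
/- Let d ≥ 2, ranks r₀ = r_d = 1 and r₁, …, r_{d−1} positive integers, and mode sizes n₁, …, n_d. Suppose the cores U_k[i_k] ∈ ℝ^{r_{k−1}×r_k} (k = 1, …, d−1) are left-orthogonal, i.e., Σ_{i_k} U_k[i_k]ᵀ U_k[i_k] = I_{r_k}, and the cores V_k[i_k] ∈ ℝ^{r_{k−1}×r_k} (k = 2, …, d) are right-orthogonal, i.e., Σ_{i_k} V_k[i_k] V_k[i_k]ᵀ = I_{r_{k−1}}. Let A_k[i_k], B_k[i_k] ∈ ℝ^{r_{k−1}×r_k} be delta cores satisfying the gauge conditions Σ_{i_k} U_k[i_k]ᵀ A_k[i_k] = 0 and Σ_{i_k} U_k[i_k]ᵀ B_k[i_k] = 0 for k = 1, …, d−1. Define tensors Y, Z ∈ ℝ^{n₁×…×n_d} by Y_{i₁…i_d} = Σ_{k=1}^d U₁[i₁]⋯U_{k−1}[i_{k−1}] A_k[i_k] V_{k+1}[i_{k+1}]⋯V_d[i_d] and Z_{i₁…i_d}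 = Σ_{k=1}^d U₁[i₁]⋯U_{k−1}[i_{k−1}] B_k[i_k] V_{k+1}[i_{k+1}]⋯V_d[i_d]. Then Σ_{i₁,…,i_d} Y_{i₁…i_d} Z_{i₁…i_d} = Σ_{k=1}^d Σ_{i_k} ⟨A_k[i_k], B_k[i_k]⟩, where ⟨·,·⟩ is the entrywise (Frobenius) inner product of matrices. -/
open Matrix

/-- `coreProd G a b` is the matrix product `G a * G (a+1) * ⋯ * G (b-1)` of a chain of
cores with compatible (dependent) sizes; it is the identity when `b = a` and junk
(zero) when `b < a`. -/
def coreProd {ι : ℕ → Type} [∀ k, Fintype (ι k)] [∀ k, DecidableEq (ι k)]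
    (G : ∀ k : ℕ, Matrix (ι k) (ι (k + 1)) ℝ) (a : ℕ) : (b : ℕ) → Matrix (ι a) (ι b) ℝ
  | 0 => if h : a = 0 then by subst h; exact 1 else 0
  | (b + 1) => if h : a = b + 1 then by subst h; exact 1 else coreProd G a b * G b

/-- Given TT cores `C k [i_k]` and a multi-index `i = (i_0, …, i_{d-1})`, `sel d C i`
is the induced chain of matrices `k ↦ C k [i_k]` (junk `0` for `k ≥ d`). -/
def sel (d : ℕ) {n r : ℕ → ℕ}
    (C : ∀ k : ℕ, Fin (n k) → Matrix (Fin (r k)) (Fin (r (k + 1))) ℝ)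
    (i : ∀ k : Fin d, Fin (n k)) (k : ℕ) : Matrix (Fin (r k)) (Fin (r (k + 1))) ℝ :=
  if h : k < d then C k (i ⟨k, h⟩) else 0

/-- The entry at multi-index `i` of the TT tangent tensor with left cores `U`, right
cores `V` and delta cores `D`:
`T_i = ∑_{k=0}^{d-1} U 0 [i_0] ⋯ U (k-1) [i_{k-1}] · D k [i_k] · V (k+1) [i_{k+1}] ⋯ V (d-1) [i_{d-1}]`,
the `1 × 1` matrix (`r 0 = r d = 1`) being identified with its (sum of) entries. -/
def tangentEntry (d : ℕ) {n r : ℕ → ℕ}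
    (U V D : ∀ k : ℕ, Fin (n k) → Matrix (Fin (r k)) (Fin (r (k + 1))) ℝ)
    (i : ∀ k : Fin d, Fin (n k)) : ℝ :=
  ∑ k ∈ Finset.range d, ∑ a, ∑ b,
    (coreProd (sel d U i) 0 k * sel d D i k * coreProd (sel d V i) (k + 1) d) a b

def leftP {n r : ℕ → ℕ} (U : ∀ k : ℕ, Fin (n k) → Matrix (Fin (r k)) (Fin (r (k + 1))) ℝ) :
    (m : ℕ) → (∀ k : Fin m, Fin (n k)) → Matrix (Fin (r 0)) (Fin (r m)) ℝ
  | 0, _ => 1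
  | m + 1, i => leftP U m (fun k => i k.castSucc) * U m (i (Fin.last m))

def tanT {n r : ℕ → ℕ} (U V D : ∀ k : ℕ, Fin (n k) → Matrix (Fin (r k)) (Fin (r (k + 1))) ℝ) :
    (m : ℕ) → (∀ k : Fin m, Fin (n k)) → Matrix (Fin (r 0)) (Fin (r m)) ℝ
  | 0, _ => 0
  | m + 1, i => tanT U V D m (fun k => i k.castSucc) * V m (i (Fin.last m))
      + leftP U m (fun k => i k.castSucc) * D m (i (Fin.last m))

lemma coreProd_self {ι : ℕ → Type} [∀ k, Fintype (ι k)] [∀ k, DecidableEq (ι k)]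
    (G : ∀ k : ℕ, Matrix (ι k) (ι (k + 1)) ℝ) (a : ℕ) : coreProd G a a = 1 := by
  cases a <;> simp [coreProd]

lemma coreProd_succ {ι : ℕ → Type} [∀ k, Fintype (ι k)] [∀ k, DecidableEq (ι k)]
    (G : ∀ k : ℕ, Matrix (ι k) (ι (k + 1)) ℝ) (a b : ℕ) (h : a ≤ b) :
    coreProd G a (b + 1) = coreProd G a b * G b := by
  have : a ≠ b + 1 := by omega
  simp [coreProd, this]

lemma coreProd_eq_leftP (d : ℕ) {n r : ℕ → ℕ}
    (U : ∀ k : ℕ, Fin (n k) → Matrix (Fin (r k)) (Fin (r (k + 1))) ℝ)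
    (i : ∀ k : Fin d, Fin (n k)) (m : ℕ) (hm : m ≤ d) :
    coreProd (sel d U i) 0 m = leftP U m (fun k => i (Fin.castLE hm k)) := by
  induction m with
  | zero => rw [coreProd_self]; rfl
  | succ m ih =>
    rw [coreProd_succ _ _ _ (Nat.zero_le m), ih (by omega)]
    have : m < d := hm
    simp only [sel, this, dite_true, leftP]
    rfl

lemma sum_eq_tanT (d : ℕ) {n r : ℕ → ℕ}
    (U V D : ∀ k : ℕ, Fin (n k) → Matrix (Fin (r k)) (Fin (r (k + 1))) ℝ)
    (i : ∀ k : Fin d, Fin (n k)) (m : ℕ) (hm : m ≤ d) :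
    ∑ k ∈ Finset.range m,
      (coreProd (sel d U i) 0 k * sel d D i k * coreProd (sel d V i) (k + 1) m)
      = tanT U V D m (fun k => i (Fin.castLE hm k)) := by
  induction m with
  | zero => simp [tanT]
  | succ m ih =>
    have hlt : m < d := hm
    rw [Finset.sum_range_succ, coreProd_self, Matrix.mul_one, coreProd_eq_leftP d U i m hlt.le]
    have : ∀ k ∈ Finset.range m,
        coreProd (sel d U i) 0 k * sel d D i k * coreProd (sel d V i) (k + 1) (m + 1)
        = (coreProd (sel d U i) 0 k * sel d D i k * coreProd (sel d V i) (k + 1) m)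
          * sel d V i m := by
      intro k hk
      rw [coreProd_succ _ _ _ (by have := Finset.mem_range.1 hk; omega), Matrix.mul_assoc,
        Matrix.mul_assoc, Matrix.mul_assoc]
    rw [Finset.sum_congr rfl this, ← Matrix.sum_mul, ih hlt.le]
    simp only [sel, hlt, dite_true, tanT]
    rfl

lemma tangentEntry_eq (d : ℕ) {n r : ℕ → ℕ}
    (U V D : ∀ k : ℕ, Fin (n k) → Matrix (Fin (r k)) (Fin (r (k + 1))) ℝ)
    (i : ∀ k : Fin d, Fin (n k)) :
    tangentEntry d U V D i = ∑ a, ∑ b, tanT U V D d i a b := by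
  have h := sum_eq_tanT d U V D i d le_rfl
  change _ = tanT U V D d i at h
  rw [← h]
  simp only [tangentEntry, Matrix.sum_apply]
  rw [Finset.sum_comm]
  refine Finset.sum_congr rfl fun a _ => ?_
  rw [Finset.sum_comm]

lemma sum_split {M : Type*} [AddCommMonoid M] {n : ℕ → ℕ} (m : ℕ)
    (f : (∀ k : Fin m, Fin (n k)) → Fin (n m) → M) :
    ∑ i : (∀ k : Fin (m + 1), Fin (n k)), f (fun k => i k.castSucc) (i (Fin.last m))
      = ∑ x, ∑ i, f i x := by
  rw [← Fintype.sum_prod_type']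
  refine (Fintype.sum_equiv (Fin.snocEquiv (fun k : Fin (m + 1) => Fin (n k))) _ _ ?_).symm
  rintro ⟨x, i⟩
  simp [Fin.snocEquiv]

section main
variable {n r : ℕ → ℕ} {U V A B : ∀ k : ℕ, Fin (n k) → Matrix (Fin (r k)) (Fin (r (k + 1))) ℝ}

lemma sum_sandwich {α β p q s t : Type*} [Fintype α] [Fintype β] [Fintype q] [Fintype s]
    (L : β → Matrix p q ℝ) (M : α → Matrix q s ℝ) (R : β → Matrix s t ℝ) :
    ∑ x, ∑ i, L x * M i * R x = ∑ x, L x * (∑ i, M i) * R x := by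
  simp only [Matrix.mul_sum, Matrix.sum_mul]

lemma leftP_orth (N : ℕ) (hU : ∀ k, k < N → ∑ ik, (U k ik)ᵀ * U k ik = 1) (m : ℕ) (hm : m ≤ N) :
    ∑ i, (leftP U m i)ᵀ * leftP U m i = 1 := by
  induction m with
  | zero => simp [leftP]
  | succ m ih =>
    simp only [leftP]
    rw [sum_split m (fun i x => (leftP U m i * U m x)ᵀ * (leftP U m i * U m x))]
    have : ∀ x i, (leftP U m i * U m x)ᵀ * (leftP U m i * U m x)
        = (U m x)ᵀ * ((leftP U m i)ᵀ * leftP U m i) * U m x := by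
      intro x i; simp only [Matrix.transpose_mul, Matrix.mul_assoc]
    simp only [this]
    rw [sum_sandwich, ih (by omega)]
    simpa using hU m hm

lemma leftP_tanT (N : ℕ) (hU : ∀ k, k < N → ∑ ik, (U k ik)ᵀ * U k ik = 1)
    (hA : ∀ k, k < N → ∑ ik, (U k ik)ᵀ * A k ik = 0) (m : ℕ) (hm : m ≤ N) :
    ∑ i, (leftP U m i)ᵀ * tanT U V A m i = 0 := by
  induction m with
  | zero => simp [tanT]
  | succ m ih =>
    simp only [leftP, tanT]
    rw [sum_split m (fun i x => (leftP U m i * U m x)ᵀ *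
      (tanT U V A m i * V m x + leftP U m i * A m x))]
    have : ∀ x i, (leftP U m i * U m x)ᵀ * (tanT U V A m i * V m x + leftP U m i * A m x)
        = (U m x)ᵀ * ((leftP U m i)ᵀ * tanT U V A m i) * V m x
          + (U m x)ᵀ * ((leftP U m i)ᵀ * leftP U m i) * A m x := by
      intro x i; simp only [Matrix.transpose_mul, Matrix.mul_assoc, Matrix.mul_add]
    simp only [this, Finset.sum_add_distrib]
    rw [sum_sandwich, sum_sandwich, ih (by omega), leftP_orth N hU m (by omega)]
    simpa using hA m hm

lemma trace_tanT (N : ℕ) (hU : ∀ k, k < N → ∑ ik, (U k ik)ᵀ * U k ik = 1)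
    (hV : ∀ k, 1 ≤ k → k < N + 1 → ∑ ik, V k ik * (V k ik)ᵀ = 1)
    (hA : ∀ k, k < N → ∑ ik, (U k ik)ᵀ * A k ik = 0)
    (hB : ∀ k, k < N → ∑ ik, (U k ik)ᵀ * B k ik = 0) (m : ℕ) (hm : m ≤ N + 1) :
    Matrix.trace (∑ i, (tanT U V A m i)ᵀ * tanT U V B m i)
      = ∑ k ∈ Finset.range m, ∑ ik, Matrix.trace ((A k ik)ᵀ * B k ik) := by
  induction m with
  | zero => simp [tanT]
  | succ m ih =>
    have ih := ih (by omega)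
    rw [Finset.sum_range_succ, ← ih]
    simp only [tanT]
    rw [sum_split m (fun i x => (tanT U V A m i * V m x + leftP U m i * A m x)ᵀ *
      (tanT U V B m i * V m x + leftP U m i * B m x))]
    have : ∀ x i, (tanT U V A m i * V m x + leftP U m i * A m x)ᵀ *
        (tanT U V B m i * V m x + leftP U m i * B m x)
        = (V m x)ᵀ * ((tanT U V A m i)ᵀ * tanT U V B m i) * V m x
          + (A m x)ᵀ * ((leftP U m i)ᵀ * tanT U V B m i) * V m x
          + ((V m x)ᵀ * ((leftP U m i)ᵀ * tanT U V A m i)ᵀ * B m x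
          + (A m x)ᵀ * ((leftP U m i)ᵀ * leftP U m i) * B m x) := by
      intro x i
      simp only [Matrix.transpose_add, Matrix.transpose_mul, Matrix.transpose_transpose,
        Matrix.mul_assoc, Matrix.mul_add, Matrix.add_mul]
    simp only [this, Finset.sum_add_distrib]
    rw [sum_sandwich, sum_sandwich, sum_sandwich, sum_sandwich, ← Matrix.transpose_sum,
      leftP_tanT N hU hA m (by omega), leftP_tanT N hU hB m (by omega),
      leftP_orth N hU m (by omega)]
    simp only [Matrix.transpose_zero, Matrix.mul_zero, Matrix.zero_mul, Finset.sum_const_zero,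
      add_zero, zero_add, Matrix.mul_one, Matrix.trace_add, Matrix.trace_sum (s := Finset.univ)
        (f := fun x => (A m x)ᵀ * B m x)]
    congr 1
    rcases Nat.eq_zero_or_pos m with h0 | h0
    · subst h0; simp [tanT]
    · set M := ∑ i, (tanT U V A m i)ᵀ * tanT U V B m i
      rw [Matrix.trace_sum]
      have : ∀ x, Matrix.trace ((V m x)ᵀ * M * V m x)
          = Matrix.trace (M * (V m x * (V m x)ᵀ)) := by
        intro x
        rw [Matrix.mul_assoc, Matrix.trace_mul_comm, Matrix.mul_assoc]
      simp only [this]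
      rw [← Matrix.trace_sum, ← Matrix.mul_sum, hV m h0 (by omega), Matrix.mul_one]

lemma trace_transpose_mul_eq {p q : ℕ} (M N : Matrix (Fin p) (Fin q) ℝ) :
    Matrix.trace (Mᵀ * N) = ∑ a, ∑ b, M a b * N a b := by
  simp only [Matrix.trace, Matrix.diag, Matrix.mul_apply, Matrix.transpose_apply]
  exact Finset.sum_comm

lemma one_by_one {p q : ℕ} (hp : p = 1) (hq : q = 1) (M N : Matrix (Fin p) (Fin q) ℝ) :
    (∑ a, ∑ b, M a b) * (∑ a, ∑ b, N a b) = Matrix.trace (Mᵀ * N) := by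
  subst hp hq
  simp [trace_transpose_mul_eq]

end main

/-- For TT tangent tensors `Y`, `Z` given by delta cores `A`, `B` (with left-orthogonal
cores `U`, right-orthogonal cores `V`, and gauge conditions on `A` and `B`), the inner
product is the sum of the inner products of the delta cores:
`⟨Y, Z⟩ = ∑_{k} ∑_{i_k} ⟨A k [i_k], B k [i_k]⟩`. Cores are indexed from `0` rather than
from `1` as in the paper, so e.g. left-orthogonality is required for `k < d - 1`. -/
theorem stmt_14 (d : ℕ) (hd : 2 ≤ d) (n r : ℕ → ℕ) (hr0 : r 0 = 1) (hrd : r d = 1)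
    (U V A B : ∀ k : ℕ, Fin (n k) → Matrix (Fin (r k)) (Fin (r (k + 1))) ℝ)
    (hU : ∀ k, k < d - 1 → ∑ ik, (U k ik)ᵀ * U k ik = 1)
    (hV : ∀ k, 1 ≤ k → k < d → ∑ ik, V k ik * (V k ik)ᵀ = 1)
    (hA : ∀ k, k < d - 1 → ∑ ik, (U k ik)ᵀ * A k ik = 0)
    (hB : ∀ k, k < d - 1 → ∑ ik, (U k ik)ᵀ * B k ik = 0) :
    ∑ i : ∀ k : Fin d, Fin (n k), tangentEntry d U V A i * tangentEntry d U V B i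
      = ∑ k ∈ Finset.range d, ∑ ik : Fin (n k), ∑ a, ∑ b, A k ik a b * B k ik a b := by
  simp only [tangentEntry_eq, one_by_one hr0 hrd]
  rw [← Matrix.trace_sum, trace_tanT (d - 1) hU (fun k h1 h2 => hV k h1 (by omega)) hA hB d
    (by omega)]
  simp only [trace_transpose_mul_eq]
end

section
/- Let E be a finite-dimensional real inner product space and A : E → E a self-adjoint linear map, and let f(x) = ⟨A x, x⟩ / ⟨x, x⟩ for x ≠ 0. Then for every x ≠ 0 and every z ∈ E, the Euclidean Hessian of f at x applied to z satisfies ∇²f(x) z = (2/⟨x,x⟩) A z − 2 (f(x)/⟨x,x⟩) z − 4 (⟨A x, z⟩/⟨x,x⟩²) x − 4 (⟨x, z⟩/⟨x,x⟩²) A x + 8 f(x) (⟨x, z⟩/⟨x,x⟩²) x, where ∇²f(x) z is the element of E satisfying ⟨∇²f(x) z, h⟩ = D²f(x)[z, h] for all h ∈ E. -/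
open scoped RealInnerProductSpace

theorem inner_fderiv_aux {E : Type*} [NormedAddCommGroup E] [InnerProductSpace ℝ E]
    (B : E →L[ℝ] E) (hB : ∀ x y : E, ⟪B x, y⟫ = ⟪x, B y⟫) (y : E) :
    HasFDerivAt (fun y => ⟪B y, y⟫) (innerSL ℝ ((2:ℝ) • B y)) y := by
  refine (B.hasFDerivAt.inner ℝ (hasFDerivAt_id y)).congr_fderiv ?_
  ext h
  simp only [ContinuousLinearMap.comp_apply, ContinuousLinearMap.prod_apply,
    fderivInnerCLM_apply, ContinuousLinearMap.id_apply, innerSL_apply_apply, inner_smul_left, id]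
  rw [hB h y, real_inner_comm (B y) h]
  simp
  ring

/-- Let `E` be a finite-dimensional real inner product space, `A : E → E` a
self-adjoint linear map and `f(x) = ⟨A x, x⟩ / ⟨x, x⟩` the Rayleigh quotient. For
`x ≠ 0` and `z ∈ E`, the Euclidean Hessian of `f` at `x` applied to `z` (i.e. the
element `H ∈ E` with `⟨H, h⟩ = D²f(x)[z, h]` for all `h`) satisfies
`∇²f(x) z = (2/⟨x,x⟩) A z − 2 (f(x)/⟨x,x⟩) z − 4 (⟨A x, z⟩/⟨x,x⟩²) x
  − 4 (⟨x, z⟩/⟨x,x⟩²) A x + 8 f(x) (⟨x, z⟩/⟨x,x⟩²) x`. -/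
theorem stmt_16 {E : Type*} [NormedAddCommGroup E] [InnerProductSpace ℝ E]
    [FiniteDimensional ℝ E]
    (A : E →ₗ[ℝ] E) (hA : ∀ x y : E, ⟪A x, y⟫ = ⟪x, A y⟫)
    (f : E → ℝ) (hf : ∀ x, f x = ⟪A x, x⟫ / ⟪x, x⟫)
    (x : E) (hx : x ≠ 0) (z : E) (H : E)
    (hH : ∀ h : E, ⟪H, h⟫ = fderiv ℝ (fderiv ℝ f) x z h) :
    H = (2 / ⟪x, x⟫) • A z - (2 * (f x / ⟪x, x⟫)) • z
        - (4 * (⟪A x, z⟫ / ⟪x, x⟫ ^ 2)) • x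
        - (4 * (⟪x, z⟫ / ⟪x, x⟫ ^ 2)) • A x
        + (8 * f x * (⟪x, z⟫ / ⟪x, x⟫ ^ 2)) • x := by
  set B : E →L[ℝ] E := LinearMap.toContinuousLinearMap A with hBdef
  have hBA : ∀ y, A y = B y := fun y => rfl
  simp only [hBA] at hA hf ⊢
  have hp := inner_fderiv_aux B hA
  have hq : ∀ y : E, HasFDerivAt (fun y : E => ⟪y, y⟫) (innerSL ℝ ((2:ℝ) • y)) y :=
    inner_fderiv_aux (ContinuousLinearMap.id ℝ E) (fun _ _ => rfl)
  have hne : ∀ y : E, y ≠ 0 → ⟪y, y⟫ ≠ 0 := fun y hy => inner_self_ne_zero.mpr hy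
  have hi : ∀ y : E, y ≠ 0 → HasFDerivAt (fun y : E => (⟪y, y⟫)⁻¹)
      ((-(⟪y, y⟫ ^ 2)⁻¹) • innerSL ℝ ((2:ℝ) • y)) y := fun y hy =>
    HasDerivAt.comp_hasFDerivAt (f := fun y : E => ⟪y, y⟫) y (hasDerivAt_inv (hne y hy)) (hq y)
  have hf' : f = fun y => ⟪B y, y⟫ * (⟪y, y⟫)⁻¹ := by
    funext y; rw [hf, div_eq_mul_inv]
  let g : E → E := fun y => (⟪y, y⟫)⁻¹ • ((2:ℝ) • B y)
    - (⟪B y, y⟫ * ((⟪y, y⟫)⁻¹ * (⟪y, y⟫)⁻¹)) • ((2:ℝ) • y)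
  have h1 : ∀ y : E, y ≠ 0 → fderiv ℝ f y = innerSL ℝ (g y) := by
    intro y hy
    rw [hf', ((hp y).fun_mul (hi y hy)).fderiv]
    ext h
    simp only [g, add_apply, smul_apply,
      innerSL_apply_apply, inner_smul_left, inner_sub_left, smul_eq_mul]
    have := hne y hy
    simp
    field_simp
    ring
  have h2 : fderiv ℝ f =ᶠ[nhds x] fun y => innerSL ℝ (g y) := by
    filter_upwards [isOpen_ne.mem_nhds hx] with y hy using h1 y hy
  have hix := hi x hx
  have hg := (hix.fun_smul (B.hasFDerivAt.const_smul (2:ℝ))).fun_sub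
    (((hp x).fun_mul (hix.fun_mul hix)).fun_smul ((hasFDerivAt_id x).const_smul (2:ℝ)))
  have h3 := (innerSL ℝ (E := E)).hasFDerivAt.comp x hg
  apply ext_inner_right ℝ
  intro h
  have h4 : fderiv ℝ (fderiv ℝ f) x = _ := h2.fderiv_eq.trans h3.fderiv
  rw [hH h, h4, hf x, ContinuousLinearMap.comp_apply]
  erw [innerSL_apply_apply]
  have := hne x hx
  simp [inner_add_left, inner_sub_left, inner_smul_left]
  field_simp
  ring
end
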